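/- Let (u,τ) be a classical solution of the p-system on ℝ×[0,T) (T a finite positive constant or infinity), twice continuously differentiable, such that at t=0 the functions u(·,0), τ(·,0)>0, ρ(·,0)=1/τ(·,0), α(·,0), β(·,0) are all uniformly bounded, and let M be a constant with α(x,0) < M and β(x,0) < M for all x ∈ ℝ. Then τ_t(x,t) = u_x(x,t) = (α(x,t)+β(x,t))/2 < M for all (x,t) ∈ ℝ×[0,T). -/

import Mathlib

open Real Set MeasureTheory

noncomputable section

/-- Partial derivative in the spatial variable `x`. -/
def pdx (f : ℝ → ℝ → ℝ) (x t : ℝ) : ℝ := deriv (fun y => f y t) x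

/-- Partial derivative in the time variable `t`. -/
def pdt (f : ℝ → ℝ → ℝ) (x t : ℝ) : ℝ := deriv (fun s => f x s) t

/-- The time strip `ℝ × [0, T)`, where `T` is a real number or `+∞`. -/
def strip (T : EReal) : Set (ℝ × ℝ) := {p : ℝ × ℝ | 0 ≤ p.2 ∧ (p.2 : EReal) < T}

/-- `η = (2√(Kγ)/(γ−1)) τ^{−(γ−1)/2}`. -/
def etaP (K γ : ℝ) (τ : ℝ → ℝ → ℝ) (x t : ℝ) : ℝ :=
  2 * Real.sqrt (K * γ) / (γ - 1) * τ x t ^ (-(γ - 1) / 2)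

/-- Gradient variable `α = s_x = u_x + η_x` for the p-system. -/
def alphaP (K γ : ℝ) (u τ : ℝ → ℝ → ℝ) (x t : ℝ) : ℝ :=
  pdx u x t + pdx (etaP K γ τ) x t

/-- Gradient variable `β = r_x = u_x − η_x` for the p-system. -/
def betaP (K γ : ℝ) (u τ : ℝ → ℝ → ℝ) (x t : ℝ) : ℝ :=
  pdx u x t - pdx (etaP K γ τ) x t

/-- The p-system `τ_t − u_x = 0`, `u_t + p_x = 0` with `p = K τ^{−γ}`, at the point `(x,t)`. -/
def pSystem (K γ : ℝ) (u τ : ℝ → ℝ → ℝ) (x t : ℝ) : Prop :=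
  pdt τ x t - pdx u x t = 0 ∧
  pdt u x t + pdx (fun y s => K * τ y s ^ (-γ)) x t = 0

/-- Riemann invariant `s = u + η`. -/
def sRi (K γ : ℝ) (u τ : ℝ → ℝ → ℝ) (x t : ℝ) : ℝ := u x t + etaP K γ τ x t

/-- Riemann invariant `r = u − η`. -/
def rRi (K γ : ℝ) (u τ : ℝ → ℝ → ℝ) (x t : ℝ) : ℝ := u x t - etaP K γ τ x t

/-- The Lagrangian wave speed `c = √(Kγ) τ^{−(γ+1)/2}`. -/
def cP (K γ : ℝ) (τ : ℝ → ℝ → ℝ) (x t : ℝ) : ℝ :=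
  Real.sqrt (K * γ) * τ x t ^ (-(γ + 1) / 2)

/-- The constant `K_τ = (2√(Kγ)/(γ−1))^{2/(γ−1)}`. -/
def KtauC (K γ : ℝ) : ℝ := (2 * Real.sqrt (K * γ) / (γ - 1)) ^ (2 / (γ - 1))

/-- The constant `K_c = √(Kγ) K_τ^{−(γ+1)/2}`. -/
def KcC (K γ : ℝ) : ℝ := Real.sqrt (K * γ) * KtauC K γ ^ (-(γ + 1) / 2)

/-- `k₁ = ((γ+1)K_c/(2(γ−1))) η^{2/(γ−1)}`. -/
def k1P (K γ : ℝ) (τ : ℝ → ℝ → ℝ) (x t : ℝ) : ℝ :=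
  (γ + 1) * KcC K γ / (2 * (γ - 1)) * etaP K γ τ x t ^ (2 / (γ - 1))

/-!
The Riemann invariants `s` and `r` are constant along the characteristics `dx/dt = c` and
`dx/dt = -c`. Hence they stay bounded, `c` stays bounded, and the domains of dependence are compact.
Differentiating the transport equations in `x` gives the Riccati equations
`α_t + c α_x = -k₁ α (α - β)` and `β_t - c β_x = -k₁ β (β - α)` with `k₁ ≥ 0`, so the larger of `α`
and `β` cannot grow while it is nonnegative. Finally `M ≥ 0`, because `u_x = (α + β) / 2 < M` at
`t = 0` and `u` is bounded there; so `α` and `β` remain below `M`, and so does their mean `u_x`.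
-/

open Filter Function Topology

section Compactness

variable {X ι : Type*} [TopologicalSpace X] [Finite ι] {S : Set X} {f : ι → X → ℝ}

lemma exists_forall_lt_of_isCompact (hS : IsCompact S) (hf : ∀ i, ContinuousOn (f i) S) :
    ∃ N, ∀ i, ∀ p ∈ S, f i p < N := by
  suffices ∀ᶠ N in atTop, ∀ i, ∀ p ∈ S, f i p < N from this.exists
  refine eventually_all.2 fun i => ?_
  obtain ⟨C, hC⟩ := hS.bddAbove_image (hf i)
  filter_upwards [eventually_gt_atTop C] with N hN p hp
  exact (hC (mem_image_of_mem _ hp)).trans_lt hN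

lemma exists_pos_forall_lt_sub_of_isCompact (hS : IsCompact S) (hf : ∀ i, ContinuousOn (f i) S)
    {M : ℝ} (hM : ∀ i, ∀ p ∈ S, f i p < M) : ∃ δ > 0, ∀ i, ∀ p ∈ S, f i p < M - δ := by
  suffices ∀ᶠ δ in 𝓝[>] 0, ∀ i, ∀ p ∈ S, f i p < M - δ from
    (eventually_mem_nhdsWithin.and this).exists
  refine eventually_all.2 fun i => ?_
  rcases S.eq_empty_or_nonempty with rfl | hne
  · simp
  obtain ⟨p₀, hp₀, hmax⟩ := hS.exists_isMaxOn hne (hf i)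
  filter_upwards [Ioo_mem_nhdsGT (sub_pos.2 (hM i p₀ hp₀))] with δ hδ p hp
  linarith [isMaxOn_iff.1 hmax p hp, hδ.2]

end Compactness

lemma nonneg_of_hasLineDerivAt_of_eventually_le {E : Type*} [AddCommGroup E] [Module ℝ E]
    {f : E → ℝ} {f' : ℝ} {p v : E} (hf : HasLineDerivAt ℝ f f' p v)
    (h : ∀ᶠ s : ℝ in 𝓝[<] 0, f (p + s • v) ≤ f p) : 0 ≤ f' := by
  refine ge_of_tendsto hf.tendsto_slope_zero_left ?_
  filter_upwards [h, self_mem_nhdsWithin] with s hs hs0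
  exact mul_nonneg_of_nonpos_of_nonpos (inv_nonpos.2 hs0.le) (sub_nonpos.2 hs)

/-- The backward triangle with apex `(x₀, t₁)`, the domain of dependence of the apex for
propagation speeds up to `L`; its base lies on `t = 0`. -/
def backwardTriangle (x₀ t₁ L : ℝ) : Set (ℝ × ℝ) :=
  {p | 0 ≤ p.2 ∧ p.2 ≤ t₁ ∧ |p.1 - x₀| ≤ L * (t₁ - p.2)}

section BackwardTriangle

variable {x₀ t₁ L a : ℝ} {p : ℝ × ℝ}

lemma isCompact_backwardTriangle (x₀ t₁ L : ℝ) : IsCompact (backwardTriangle x₀ t₁ L) := by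
  have hclosed : IsClosed (backwardTriangle x₀ t₁ L) :=
    (isClosed_le continuous_const continuous_snd).inter
      ((isClosed_le continuous_snd continuous_const).inter
        (isClosed_le (by fun_prop : Continuous fun p : ℝ × ℝ => |p.1 - x₀|) (by fun_prop)))
  refine ((isCompact_closedBall x₀ (|L| * t₁)).prod (isCompact_Icc (a := 0) (b := t₁)))
    |>.of_isClosed_subset hclosed fun p ⟨h0, h1, hcone⟩ => ⟨?_, h0, h1⟩
  rw [Metric.mem_closedBall, Real.dist_eq]
  calc |p.1 - x₀| ≤ L * (t₁ - p.2) := hcone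
    _ ≤ |L| * t₁ := mul_le_mul (le_abs_self L) (by linarith) (by linarith) (abs_nonneg L)

lemma add_smul_mem_backwardTriangle (hp : p ∈ backwardTriangle x₀ t₁ L) (ha : |a| ≤ L) {s : ℝ}
    (hs : s ∈ Icc (-p.2) 0) : p + s • ((a, 1) : ℝ × ℝ) ∈ backwardTriangle x₀ t₁ L := by
  obtain ⟨-, h1, hcone⟩ := hp
  obtain ⟨hs0, hs1⟩ := hs
  simp only [backwardTriangle, mem_ofPred_eq, Prod.fst_add, Prod.snd_add, Prod.smul_fst,
    Prod.smul_snd, smul_eq_mul, mul_one]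
  refine ⟨by linarith, by linarith, ?_⟩
  calc |p.1 + s * a - x₀| = |(p.1 - x₀) + s * a| := by ring_nf
    _ ≤ |p.1 - x₀| + |s * a| := abs_add_le _ _
    _ ≤ L * (t₁ - p.2) + -s * L := by
      rw [abs_mul, abs_of_nonpos hs1]
      gcongr
      linarith
    _ = L * (t₁ - (p.2 + s)) := by ring

lemma tendsto_add_smul_nhdsWithin_backwardTriangle (hp : p ∈ backwardTriangle x₀ t₁ L)
    (hp0 : 0 < p.2) (ha : |a| ≤ L) :
    Tendsto (fun s : ℝ => p + s • ((a, 1) : ℝ × ℝ)) (𝓝[<] 0) (𝓝[backwardTriangle x₀ t₁ L] p) := by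
  refine tendsto_nhdsWithin_iff.2 ⟨?_, ?_⟩
  · have hcont : Continuous fun s : ℝ => p + s • ((a, 1) : ℝ × ℝ) := by fun_prop
    simpa using (hcont.tendsto 0).mono_left nhdsWithin_le_nhds
  · filter_upwards [Ico_mem_nhdsLT (neg_lt_zero.2 hp0)] with s hs
    exact add_smul_mem_backwardTriangle hp ha ⟨hs.1, hs.2.le⟩

-- At an earliest point where some `f i` is nonnegative, that `f i` vanishes and was negative
-- before, so it cannot be strictly decreasing along a direction coming from inside the triangle.
lemma neg_on_backwardTriangle_of_first_crossing {ι : Type*} [Finite ι] (hL : 0 ≤ L)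
    {f : ι → ℝ × ℝ → ℝ} (hf : ∀ i, ContinuousOn (f i) (backwardTriangle x₀ t₁ L))
    (hbase : ∀ i, ∀ p ∈ backwardTriangle x₀ t₁ L, p.2 = 0 → f i p < 0)
    (hcross : ∀ i, ∀ p ∈ backwardTriangle x₀ t₁ L, 0 < p.2 → f i p = 0 → (∀ j, f j p ≤ 0) →
      ∃ a v, |a| ≤ L ∧ v < 0 ∧ HasLineDerivAt ℝ (f i) v p (a, 1)) :
    ∀ i, ∀ p ∈ backwardTriangle x₀ t₁ L, f i p < 0 := by
  by_contra! ⟨i₀, q, hq, hfq⟩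
  set Δ := backwardTriangle x₀ t₁ L
  have hΔ : IsCompact Δ := isCompact_backwardTriangle x₀ t₁ L
  have hcompact : IsCompact (⋃ i, Δ ∩ f i ⁻¹' Ici 0) := isCompact_iUnion fun i =>
    hΔ.of_isClosed_subset ((hf i).preimage_isClosed_of_isClosed hΔ.isClosed isClosed_Ici)
      inter_subset_left
  obtain ⟨p, hpmem, hfirst⟩ := hcompact.exists_isMinOn ⟨q, mem_iUnion.2 ⟨i₀, hq, hfq⟩⟩
    continuous_snd.continuousOn
  obtain ⟨i, hp, hfp⟩ := mem_iUnion.1 hpmem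
  have hp0 : 0 < p.2 := hp.1.lt_of_ne fun h => (hbase i p hp h.symm).not_ge hfp
  have hbefore : ∀ a, |a| ≤ L → ∀ᶠ s : ℝ in 𝓝[<] 0, ∀ j, f j (p + s • ((a, 1) : ℝ × ℝ)) < 0 := by
    intro a ha
    filter_upwards [self_mem_nhdsWithin, tendsto_nhdsWithin_iff.1
      (tendsto_add_smul_nhdsWithin_backwardTriangle hp hp0 ha) |>.2] with s hs hmem j
    by_contra! hge
    have hlater : p.2 ≤ (p + s • ((a, 1) : ℝ × ℝ)).2 := hfirst (mem_iUnion.2 ⟨j, hmem, hge⟩)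
    simp only [Prod.snd_add, Prod.smul_snd, smul_eq_mul, mul_one] at hlater
    exact absurd hs (by simpa using hlater)
  have hle : ∀ j, f j p ≤ 0 := fun j =>
    le_of_tendsto ((hf j p hp).tendsto.comp
      (tendsto_add_smul_nhdsWithin_backwardTriangle hp hp0 (by simpa using hL)))
      ((hbefore 0 (by simpa using hL)).mono fun s hs => (hs j).le)
  obtain ⟨a, v, ha, hv, hderiv⟩ := hcross i p hp hp0 ((hle i).antisymm hfp) hle
  exact hv.not_ge <| nonneg_of_hasLineDerivAt_of_eventually_le hderiv <|
    (hbefore a ha).mono fun s hs => (hs i).le.trans hfp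

end BackwardTriangle

section Strip

variable {T : EReal} {p : ℝ × ℝ}

lemma backwardTriangle_subset_strip {x₀ t₁ : ℝ} (L : ℝ) (ht₁ : (t₁ : EReal) < T) :
    backwardTriangle x₀ t₁ L ⊆ strip T :=
  fun _ hp => ⟨hp.1, (EReal.coe_le_coe_iff.2 hp.2.1).trans_lt ht₁⟩

-- `M - δ * exp (-N * t)` is a strict barrier: a family touching it from below satisfies
-- `-(k * f) = -(k * M) + k * (δ * exp (-N * t))`, which is less than its slope
-- `N * (δ * exp (-N * t))` as soon as `k < N`.
theorem lt_on_strip_of_damped {ι : Type*} [Finite ι] {L M : ℝ} (hL : 0 ≤ L) (hM : 0 ≤ M)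
    {f c k : ι → ℝ × ℝ → ℝ} (hf : ∀ i, ContinuousOn (f i) (strip T))
    (hk : ∀ i, ContinuousOn (k i) (strip T))
    (hderiv : ∀ i, ∀ p ∈ strip T, 0 < p.2 →
      HasLineDerivAt ℝ (f i) (-(k i p * f i p)) p (c i p, 1))
    (hdamp : ∀ i, ∀ p ∈ strip T, (∀ j, f j p ≤ f i p) → 0 ≤ k i p)
    (hspeed : ∀ i, ∀ p ∈ strip T, (∀ j, f j p ≤ M) → |c i p| ≤ L)
    (hinit : ∀ i x, f i (x, 0) < M) :
    ∀ i, ∀ p ∈ strip T, f i p < M := by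
  intro i₀ p₀ hp₀
  set Δ := backwardTriangle p₀.1 p₀.2 L
  have hsub : Δ ⊆ strip T := backwardTriangle_subset_strip L hp₀.2
  have hΔ : IsCompact Δ := isCompact_backwardTriangle _ _ L
  have hfΔ : ∀ i, ContinuousOn (f i) Δ := fun i => (hf i).mono hsub
  obtain ⟨N, hN⟩ := exists_forall_lt_of_isCompact hΔ fun i => (hk i).mono hsub
  obtain ⟨δ, hδ, hbase⟩ : ∃ δ > 0, ∀ i, ∀ p ∈ Δ ∩ {p | p.2 = 0}, f i p < M - δ := by
    refine exists_pos_forall_lt_sub_of_isCompact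
      (hΔ.inter_right (isClosed_eq continuous_snd continuous_const))
      (fun i => (hfΔ i).mono inter_subset_left) ?_
    rintro i ⟨x, _⟩ ⟨-, rfl⟩
    exact hinit i x
  have hgap : ∀ t, 0 < δ * exp (-N * t) := fun t => by positivity
  have hbarrier : ∀ (p : ℝ × ℝ) (a : ℝ), HasLineDerivAt ℝ (fun q : ℝ × ℝ => M - δ * exp (-N * q.2))
      (N * (δ * exp (-N * p.2))) p (a, 1) := by
    intro p a
    have h := ((((hasFDerivAt_snd (𝕜 := ℝ) (p := p)).const_mul (-N)).exp.const_mul δ).const_sub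
      M).hasLineDerivAt (a, 1)
    refine h.congr_deriv ?_
    simp
    ring
  have hneg := neg_on_backwardTriangle_of_first_crossing
    (f := fun i q => f i q - (M - δ * exp (-N * q.2))) hL
    (fun i => (hfΔ i).sub (by fun_prop)) ?_ ?_ i₀ p₀ ⟨hp₀.1, le_rfl, by simp⟩
  · linarith [hgap p₀.2]
  · intro i p hp hp0
    simpa [hp0] using hbase i p ⟨hp, hp0⟩
  · intro i p hp hp0 hi hle
    have hval : f i p = M - δ * exp (-N * p.2) := sub_eq_zero.1 hi
    have hki : 0 ≤ k i p := hdamp i p (hsub hp) fun j => by linarith [hle j]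
    refine ⟨c i p, _, hspeed i p (hsub hp) fun j => by linarith [hle j, hgap p.2], ?_,
      (hderiv i p (hsub hp) hp0).fun_sub (hbarrier p _)⟩
    rw [hval]
    nlinarith [mul_nonneg hki hM, mul_pos (sub_pos.2 (hN i p hp)) (hgap p.2)]

end Strip

section PartialDerivatives

variable {T : EReal} {w : ℝ → ℝ → ℝ} {p : ℝ × ℝ}

lemma uniqueDiffOn_strip (T : EReal) : UniqueDiffOn ℝ (strip T) :=
  have hstrip : strip T = univ ×ˢ Ici 0 ∩ {p : ℝ × ℝ | (p.2 : EReal) < T} := by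
    ext p; simp [strip]
  hstrip ▸ (uniqueDiffOn_univ.prod (uniqueDiffOn_Ici 0)).inter
    (isOpen_Iio.preimage (continuous_coe_real_ereal.comp continuous_snd))

lemma eventually_mem_strip (hp : p ∈ strip T) (hp0 : 0 < p.2) :
    ∀ᶠ q : ℝ × ℝ in 𝓝 p, q ∈ strip T ∧ 0 < q.2 := by
  have htime : Continuous fun q : ℝ × ℝ => (q.2 : EReal) :=
    continuous_coe_real_ereal.comp continuous_snd
  filter_upwards [continuous_snd.continuousAt.eventually (lt_mem_nhds hp0),
    htime.continuousAt.eventually (gt_mem_nhds hp.2)] with q hq0 hqT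
  exact ⟨⟨hq0.le, hqT⟩, hq0⟩

lemma strip_mem_nhds (hp : p ∈ strip T) (hp0 : 0 < p.2) : strip T ∈ 𝓝 p :=
  (eventually_mem_strip hp hp0).mono fun _ hq => hq.1

lemma hasDerivAt_fst_of_strip (hw : DifferentiableOn ℝ (uncurry w) (strip T)) (hp : p ∈ strip T) :
    HasDerivAt (fun y => w y p.2) (fderivWithin ℝ (uncurry w) (strip T) p (1, 0)) p.1 := by
  have hline : HasDerivWithinAt (fun y : ℝ => (y, p.2)) ((1, 0) : ℝ × ℝ) univ p.1 :=
    ((hasDerivAt_id p.1).prodMk (hasDerivAt_const p.1 p.2)).hasDerivWithinAt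
  exact hasDerivWithinAt_univ.1 <|
    (hw p hp).hasFDerivWithinAt.comp_hasDerivWithinAt (f := fun y : ℝ => (y, p.2)) p.1 hline
      fun _ _ => hp

lemma continuousOn_pdx (hw : ContDiffOn ℝ 1 (uncurry w) (strip T)) :
    ContinuousOn (uncurry (pdx w)) (strip T) :=
  ((hw.continuousOn_fderivWithin (uniqueDiffOn_strip T) le_rfl).clm_apply
    continuousOn_const).congr fun _ hp =>
      (hasDerivAt_fst_of_strip (hw.differentiableOn one_ne_zero) hp).deriv

lemma pdx_eq_fderiv (hw : DifferentiableAt ℝ (uncurry w) p) :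
    pdx w p.1 p.2 = fderiv ℝ (uncurry w) p (1, 0) :=
  (hw.hasFDerivAt.comp_hasDerivAt (f := fun y : ℝ => (y, p.2)) p.1
    ((hasDerivAt_id p.1).prodMk (hasDerivAt_const p.1 p.2))).deriv

lemma pdt_eq_fderiv (hw : DifferentiableAt ℝ (uncurry w) p) :
    pdt w p.1 p.2 = fderiv ℝ (uncurry w) p (0, 1) :=
  (hw.hasFDerivAt.comp_hasDerivAt (f := fun s : ℝ => (p.1, s)) p.2
    ((hasDerivAt_const p.2 p.1).prodMk (hasDerivAt_id p.2))).deriv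

lemma map_prodMk_one {E : Type*} [AddCommGroup E] [Module ℝ E] [TopologicalSpace E]
    (A : ℝ × ℝ →L[ℝ] E) (a : ℝ) : A (a, 1) = a • A (1, 0) + A (0, 1) := by
  simp [← map_smul, ← map_add]

end PartialDerivatives

section Transport

variable {E G : Type*} [NormedAddCommGroup E] [NormedSpace ℝ E]
  [NormedAddCommGroup G] [NormedSpace ℝ G]

lemma hasLineDerivAt_fderiv_of_transport {F : E → G} {V : E → E} {V' : E →L[ℝ] E} {p : E}
    (hF : ContDiffAt ℝ 2 F p) (hV : HasFDerivAt V V' p) (htransport : ∀ᶠ q in 𝓝 p,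
      fderiv ℝ F q (V q) = 0) (v : E) :
    HasLineDerivAt ℝ (fun q => fderiv ℝ F q v) (-fderiv ℝ F p (V' v)) p (V p) := by
  have hF' : HasFDerivAt (fderiv ℝ F) (fderiv ℝ (fderiv ℝ F) p) p :=
    ((hF.fderiv_right (m := 1) (by norm_num)).differentiableAt one_ne_zero).hasFDerivAt
  have hzero := (hF'.clm_apply hV).unique ((hasFDerivAt_const 0 p).congr_of_eventuallyEq htransport)
  have hsum : fderiv ℝ F p (V' v) + fderiv ℝ (fderiv ℝ F) p v (V p) = 0 := by
    simpa using DFunLike.congr_fun hzero v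
  have hderiv := (hF'.clm_apply (hasFDerivAt_const v p)).hasLineDerivAt (V p)
  refine hderiv.congr_deriv ?_
  have hsymm : fderiv ℝ (fderiv ℝ F) p (V p) v = fderiv ℝ (fderiv ℝ F) p v (V p) :=
    (hF.isSymmSndFDerivAt (by simp)).eq _ _
  simpa [hsymm] using (neg_eq_of_add_eq_zero_right hsum).symm

lemma hasLineDerivAt_fderiv_fst_of_transport {F : ℝ × ℝ → ℝ} {c : ℝ × ℝ → ℝ}
    {c' : ℝ × ℝ →L[ℝ] ℝ} {p : ℝ × ℝ} (hF : ContDiffAt ℝ 2 F p) (hc : HasFDerivAt c c' p)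
    (htransport : ∀ᶠ q in 𝓝 p, fderiv ℝ F q (c q, 1) = 0) :
    HasLineDerivAt ℝ (fun q => fderiv ℝ F q (1, 0)) (-(c' (1, 0) * fderiv ℝ F p (1, 0))) p
      (c p, 1) := by
  have h := hasLineDerivAt_fderiv_of_transport hF (hc.prodMk (hasFDerivAt_const 1 p)) htransport
    (1, 0)
  refine h.congr_deriv ?_
  have hdir : (c'.prod 0) (1, 0) = c' (1, 0) • ((1, 0) : ℝ × ℝ) := by simp
  rw [hdir, map_smul, smul_eq_mul]

end Transport

section Constitutive

variable {K γ : ℝ} {τ : ℝ → ℝ → ℝ} {x t : ℝ} {p : ℝ × ℝ}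

lemma etaP_pos (hK : 0 < K) (hγ : 1 < γ) (hτ : 0 < τ x t) : 0 < etaP K γ τ x t := by
  have : 0 < γ - 1 := sub_pos.2 hγ
  have : 0 < γ := by linarith
  unfold etaP
  positivity

lemma cP_nonneg (hτ : 0 ≤ τ x t) : 0 ≤ cP K γ τ x t :=
  mul_nonneg (sqrt_nonneg _) (rpow_nonneg hτ _)

lemma KcC_nonneg (hγ : 1 ≤ γ) : 0 ≤ KcC K γ := by
  have : 0 ≤ γ - 1 := sub_nonneg.2 hγ
  unfold KcC KtauC
  positivity

lemma k1P_nonneg (hK : 0 < K) (hγ : 1 < γ) (hτ : 0 < τ x t) : 0 ≤ k1P K γ τ x t := by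
  have : 0 < γ - 1 := sub_pos.2 hγ
  have := KcC_nonneg (K := K) hγ.le
  have := etaP_pos hK hγ hτ
  unfold k1P
  positivity

lemma cP_eq_KcC_mul_etaP_rpow (hK : 0 < K) (hγ : 1 < γ) (hτ : 0 < τ x t) :
    cP K γ τ x t = KcC K γ * etaP K γ τ x t ^ ((γ + 1) / (γ - 1)) := by
  have hγ' : 0 < γ - 1 := sub_pos.2 hγ
  have : 0 < γ := by linarith
  have hA : 0 < 2 * √(K * γ) / (γ - 1) := by positivity
  have hexpA : 2 / (γ - 1) * (-(γ + 1) / 2) + (γ + 1) / (γ - 1) = 0 := by field_simp; ring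
  have hexpτ : -(γ - 1) / 2 * ((γ + 1) / (γ - 1)) = -(γ + 1) / 2 := by field_simp
  simp only [KcC, KtauC, etaP, cP]
  rw [mul_rpow hA.le (by positivity), ← rpow_mul hA.le, ← rpow_mul hτ.le, hexpτ]
  rw [mul_assoc, ← mul_assoc (_ ^ _) (_ ^ _), ← rpow_add hA, hexpA, rpow_zero, one_mul]

lemma cP_le_of_etaP_le (hK : 0 < K) (hγ : 1 < γ) (hτ : 0 < τ x t) {B : ℝ}
    (hB : etaP K γ τ x t ≤ B) : cP K γ τ x t ≤ KcC K γ * B ^ ((γ + 1) / (γ - 1)) := by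
  have : 0 < γ - 1 := sub_pos.2 hγ
  have := KcC_nonneg (K := K) hγ.le
  have := etaP_pos hK hγ hτ
  rw [cP_eq_KcC_mul_etaP_rpow hK hγ hτ]
  gcongr

lemma etaP_le_of_inv_le (hγ : 1 < γ) (hτ : 0 < τ x t) {C : ℝ} (hC : 1 / τ x t ≤ C) :
    etaP K γ τ x t ≤ 2 * √(K * γ) / (γ - 1) * C ^ ((γ - 1) / 2) := by
  have : 0 < γ - 1 := sub_pos.2 hγ
  have hinv : τ x t ^ (-(γ - 1) / 2) = (1 / τ x t) ^ ((γ - 1) / 2) := by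
    rw [one_div, inv_rpow hτ.le, ← rpow_neg hτ.le, neg_div]
  rw [etaP, hinv]
  gcongr

lemma hasFDerivAt_etaP (hγ : γ ≠ 1) (hτ : 0 < τ p.1 p.2) {τ' : ℝ × ℝ →L[ℝ] ℝ}
    (h : HasFDerivAt (uncurry τ) τ' p) :
    HasFDerivAt (uncurry (etaP K γ τ)) (-cP K γ τ p.1 p.2 • τ') p := by
  have hη := (h.rpow_const (p := -(γ - 1) / 2) (Or.inl hτ.ne')).const_mul
    (2 * √(K * γ) / (γ - 1))
  refine hη.congr_fderiv ?_
  have hexp : -(γ - 1) / 2 - 1 = -(γ + 1) / 2 := by ring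
  have hγ' : γ - 1 ≠ 0 := sub_ne_zero.2 hγ
  rw [smul_smul, hexp, cP, uncurry]
  congr 1
  field_simp

lemma hasFDerivAt_cP (hK : 0 < K) (hγ : 1 < γ) (hτ : ∀ᶠ q : ℝ × ℝ in 𝓝 p, 0 < τ q.1 q.2)
    {η' : ℝ × ℝ →L[ℝ] ℝ} (h : HasFDerivAt (uncurry (etaP K γ τ)) η' p) :
    HasFDerivAt (uncurry (cP K γ τ)) ((2 * k1P K γ τ p.1 p.2) • η') p := by
  have hc := (h.rpow_const (p := (γ + 1) / (γ - 1))
    (Or.inl (etaP_pos hK hγ hτ.self_of_nhds).ne')).const_mul (KcC K γ)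
  refine (hc.congr_of_eventuallyEq ?_).congr_fderiv ?_
  · filter_upwards [hτ] with q hq using cP_eq_KcC_mul_etaP_rpow hK hγ hq
  · have hγ' : γ - 1 ≠ 0 := (sub_pos.2 hγ).ne'
    have hexp : (γ + 1) / (γ - 1) - 1 = 2 / (γ - 1) := by field_simp; ring
    rw [smul_smul, hexp, k1P, uncurry]
    congr 1
    field_simp

lemma pdx_pressure (hK : 0 ≤ K) (hγ : 0 ≤ γ) (hτ : 0 < τ x t)
    (h : DifferentiableAt ℝ (fun y => τ y t) x) :
    pdx (fun y s => K * τ y s ^ (-γ)) x t = -(cP K γ τ x t ^ 2 * pdx τ x t) := by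
  refine ((h.hasDerivAt.rpow_const (Or.inl hτ.ne')).const_mul K).deriv.trans ?_
  have hsq : (τ x t ^ (-(γ + 1) / 2)) ^ 2 = τ x t ^ (-γ - 1) := by
    rw [← rpow_mul_natCast hτ.le]
    ring_nf
  rw [cP, mul_pow, sq_sqrt (mul_nonneg hK hγ), hsq, pdx]
  ring

end Constitutive

/-- A classical, twice continuously differentiable solution of the p-system on `ℝ × [0, T)` with
positive specific volume. As in `ContDiffOn`, regularity at `t = 0` is one-sided. -/
structure IsClassicalSolution (K γ : ℝ) (T : EReal) (u τ : ℝ → ℝ → ℝ) : Prop where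
  contDiffOn_u : ContDiffOn ℝ 2 (uncurry u) (strip T)
  contDiffOn_τ : ContDiffOn ℝ 2 (uncurry τ) (strip T)
  τ_pos : ∀ p ∈ strip T, 0 < τ p.1 p.2
  equations : ∀ p ∈ strip T, pSystem K γ u τ p.1 p.2

namespace IsClassicalSolution

variable {K γ : ℝ} {T : EReal} {u τ : ℝ → ℝ → ℝ} {p : ℝ × ℝ}

section Regularity

lemma contDiffOn_etaP (h : IsClassicalSolution K γ T u τ) :
    ContDiffOn ℝ 2 (uncurry (etaP K γ τ)) (strip T) :=
  contDiffOn_const.mul (h.contDiffOn_τ.rpow_const_of_ne fun p hp => (h.τ_pos p hp).ne')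

lemma continuousOn_alphaP (h : IsClassicalSolution K γ T u τ) :
    ContinuousOn (uncurry (alphaP K γ u τ)) (strip T) :=
  (continuousOn_pdx (h.contDiffOn_u.of_le one_le_two)).add
    (continuousOn_pdx (h.contDiffOn_etaP.of_le one_le_two))

lemma continuousOn_betaP (h : IsClassicalSolution K γ T u τ) :
    ContinuousOn (uncurry (betaP K γ u τ)) (strip T) :=
  (continuousOn_pdx (h.contDiffOn_u.of_le one_le_two)).sub
    (continuousOn_pdx (h.contDiffOn_etaP.of_le one_le_two))

lemma continuousOn_k1P (hK : 0 < K) (hγ : 1 < γ) (h : IsClassicalSolution K γ T u τ) :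
    ContinuousOn (uncurry (k1P K γ τ)) (strip T) :=
  continuousOn_const.mul (h.contDiffOn_etaP.continuousOn.rpow_const fun p hp =>
    Or.inl (etaP_pos hK hγ (h.τ_pos p hp)).ne')

lemma contDiffAt_u (h : IsClassicalSolution K γ T u τ) (hp : p ∈ strip T) (hp0 : 0 < p.2) :
    ContDiffAt ℝ 2 (uncurry u) p :=
  h.contDiffOn_u.contDiffAt (strip_mem_nhds hp hp0)

lemma contDiffAt_τ (h : IsClassicalSolution K γ T u τ) (hp : p ∈ strip T) (hp0 : 0 < p.2) :
    ContDiffAt ℝ 2 (uncurry τ) p :=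
  h.contDiffOn_τ.contDiffAt (strip_mem_nhds hp hp0)

lemma contDiffAt_etaP (h : IsClassicalSolution K γ T u τ) (hp : p ∈ strip T) (hp0 : 0 < p.2) :
    ContDiffAt ℝ 2 (uncurry (etaP K γ τ)) p :=
  h.contDiffOn_etaP.contDiffAt (strip_mem_nhds hp hp0)

lemma contDiffAt_sRi (h : IsClassicalSolution K γ T u τ) (hp : p ∈ strip T) (hp0 : 0 < p.2) :
    ContDiffAt ℝ 2 (uncurry (sRi K γ u τ)) p :=
  (h.contDiffAt_u hp hp0).add (h.contDiffAt_etaP hp hp0)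

lemma contDiffAt_rRi (h : IsClassicalSolution K γ T u τ) (hp : p ∈ strip T) (hp0 : 0 < p.2) :
    ContDiffAt ℝ 2 (uncurry (rRi K γ u τ)) p :=
  (h.contDiffAt_u hp hp0).sub (h.contDiffAt_etaP hp hp0)

lemma fderiv_sRi (h : IsClassicalSolution K γ T u τ) (hp : p ∈ strip T) (hp0 : 0 < p.2) :
    fderiv ℝ (uncurry (sRi K γ u τ)) p =
      fderiv ℝ (uncurry u) p + fderiv ℝ (uncurry (etaP K γ τ)) p :=
  fderiv_fun_add ((h.contDiffAt_u hp hp0).differentiableAt two_ne_zero)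
    ((h.contDiffAt_etaP hp hp0).differentiableAt two_ne_zero)

lemma fderiv_rRi (h : IsClassicalSolution K γ T u τ) (hp : p ∈ strip T) (hp0 : 0 < p.2) :
    fderiv ℝ (uncurry (rRi K γ u τ)) p =
      fderiv ℝ (uncurry u) p - fderiv ℝ (uncurry (etaP K γ τ)) p :=
  fderiv_fun_sub ((h.contDiffAt_u hp hp0).differentiableAt two_ne_zero)
    ((h.contDiffAt_etaP hp hp0).differentiableAt two_ne_zero)

lemma alphaP_eq_fderiv_sRi (h : IsClassicalSolution K γ T u τ) (hp : p ∈ strip T)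
    (hp0 : 0 < p.2) : alphaP K γ u τ p.1 p.2 = fderiv ℝ (uncurry (sRi K γ u τ)) p (1, 0) := by
  rw [h.fderiv_sRi hp hp0, add_apply, alphaP,
    pdx_eq_fderiv ((h.contDiffAt_u hp hp0).differentiableAt two_ne_zero),
    pdx_eq_fderiv ((h.contDiffAt_etaP hp hp0).differentiableAt two_ne_zero)]

lemma betaP_eq_fderiv_rRi (h : IsClassicalSolution K γ T u τ) (hp : p ∈ strip T)
    (hp0 : 0 < p.2) : betaP K γ u τ p.1 p.2 = fderiv ℝ (uncurry (rRi K γ u τ)) p (1, 0) := by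
  rw [h.fderiv_rRi hp hp0, sub_apply, betaP,
    pdx_eq_fderiv ((h.contDiffAt_u hp hp0).differentiableAt two_ne_zero),
    pdx_eq_fderiv ((h.contDiffAt_etaP hp hp0).differentiableAt two_ne_zero)]

end Regularity

section Characteristics

lemma fderiv_u_apply (hK : 0 ≤ K) (hγ : 0 ≤ γ) (h : IsClassicalSolution K γ T u τ)
    (hp : p ∈ strip T) (hp0 : 0 < p.2) (a : ℝ) :
    fderiv ℝ (uncurry u) p (a, 1) =
      a * pdx u p.1 p.2 + cP K γ τ p.1 p.2 ^ 2 * pdx τ p.1 p.2 := by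
  have hu := (h.contDiffAt_u hp hp0).differentiableAt two_ne_zero
  have hpressure := pdx_pressure hK hγ (h.τ_pos p hp)
    (hasDerivAt_fst_of_strip (h.contDiffOn_τ.differentiableOn two_ne_zero) hp).differentiableAt
  have hmomentum := (h.equations p hp).2
  rw [hpressure, pdt_eq_fderiv hu] at hmomentum
  rw [map_prodMk_one, smul_eq_mul, pdx_eq_fderiv hu]
  linarith

lemma fderiv_etaP_apply (hγ : γ ≠ 1) (h : IsClassicalSolution K γ T u τ)
    (hp : p ∈ strip T) (hp0 : 0 < p.2) (a : ℝ) :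
    fderiv ℝ (uncurry (etaP K γ τ)) p (a, 1) =
      -cP K γ τ p.1 p.2 * (a * pdx τ p.1 p.2 + pdx u p.1 p.2) := by
  have hτ := (h.contDiffAt_τ hp hp0).differentiableAt two_ne_zero
  have hmass : pdt τ p.1 p.2 = pdx u p.1 p.2 := sub_eq_zero.1 (h.equations p hp).1
  rw [(hasFDerivAt_etaP hγ (h.τ_pos p hp) hτ.hasFDerivAt).fderiv, smul_apply, map_prodMk_one,
    ← pdx_eq_fderiv hτ, ← pdt_eq_fderiv hτ, hmass, smul_eq_mul, smul_eq_mul]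

lemma fderiv_sRi_characteristic (hK : 0 ≤ K) (hγ : 1 < γ) (h : IsClassicalSolution K γ T u τ)
    (hp : p ∈ strip T) (hp0 : 0 < p.2) :
    fderiv ℝ (uncurry (sRi K γ u τ)) p (cP K γ τ p.1 p.2, 1) = 0 := by
  rw [h.fderiv_sRi hp hp0, add_apply, h.fderiv_u_apply hK (by linarith) hp hp0,
    h.fderiv_etaP_apply hγ.ne' hp hp0]
  ring

lemma fderiv_rRi_characteristic (hK : 0 ≤ K) (hγ : 1 < γ) (h : IsClassicalSolution K γ T u τ)
    (hp : p ∈ strip T) (hp0 : 0 < p.2) :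
    fderiv ℝ (uncurry (rRi K γ u τ)) p (-cP K γ τ p.1 p.2, 1) = 0 := by
  rw [h.fderiv_rRi hp hp0, sub_apply, h.fderiv_u_apply hK (by linarith) hp hp0,
    h.fderiv_etaP_apply hγ.ne' hp hp0]
  ring

lemma hasLineDerivAt_sRi (hK : 0 ≤ K) (hγ : 1 < γ) (h : IsClassicalSolution K γ T u τ)
    (hp : p ∈ strip T) (hp0 : 0 < p.2) :
    HasLineDerivAt ℝ (uncurry (sRi K γ u τ)) 0 p (cP K γ τ p.1 p.2, 1) :=
  h.fderiv_sRi_characteristic hK hγ hp hp0 ▸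
    ((h.contDiffAt_sRi hp hp0).differentiableAt two_ne_zero).hasFDerivAt.hasLineDerivAt _

lemma hasLineDerivAt_rRi (hK : 0 ≤ K) (hγ : 1 < γ) (h : IsClassicalSolution K γ T u τ)
    (hp : p ∈ strip T) (hp0 : 0 < p.2) :
    HasLineDerivAt ℝ (uncurry (rRi K γ u τ)) 0 p (-cP K γ τ p.1 p.2, 1) :=
  h.fderiv_rRi_characteristic hK hγ hp hp0 ▸
    ((h.contDiffAt_rRi hp hp0).differentiableAt two_ne_zero).hasFDerivAt.hasLineDerivAt _

lemma exists_hasFDerivAt_cP (hK : 0 < K) (hγ : 1 < γ) (h : IsClassicalSolution K γ T u τ)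
    (hp : p ∈ strip T) (hp0 : 0 < p.2) : ∃ c' : ℝ × ℝ →L[ℝ] ℝ,
      HasFDerivAt (uncurry (cP K γ τ)) c' p ∧ c' (1, 0) = k1P K γ τ p.1 p.2 *
        (alphaP K γ u τ p.1 p.2 - betaP K γ u τ p.1 p.2) := by
  have hη := (h.contDiffAt_etaP hp hp0).differentiableAt two_ne_zero
  refine ⟨_, hasFDerivAt_cP hK hγ ?_ hη.hasFDerivAt, ?_⟩
  · filter_upwards [strip_mem_nhds hp hp0] with q hq using h.τ_pos q hq
  · rw [smul_apply, ← pdx_eq_fderiv hη, smul_eq_mul, alphaP, betaP]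
    ring

lemma hasLineDerivAt_alphaP (hK : 0 < K) (hγ : 1 < γ) (h : IsClassicalSolution K γ T u τ)
    (hp : p ∈ strip T) (hp0 : 0 < p.2) :
    HasLineDerivAt ℝ (uncurry (alphaP K γ u τ))
      (-(k1P K γ τ p.1 p.2 * (alphaP K γ u τ p.1 p.2 - betaP K γ u τ p.1 p.2) *
        alphaP K γ u τ p.1 p.2)) p (cP K γ τ p.1 p.2, 1) := by
  obtain ⟨c', hc, hcx⟩ := h.exists_hasFDerivAt_cP hK hγ hp hp0
  have hinterior := eventually_mem_strip hp hp0
  have htransport := hasLineDerivAt_fderiv_fst_of_transport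
    (h.contDiffAt_sRi hp hp0) hc
    (hinterior.mono fun q hq => h.fderiv_sRi_characteristic hK.le hγ hq.1 hq.2)
  rw [hcx] at htransport
  rw [h.alphaP_eq_fderiv_sRi hp hp0] at htransport ⊢
  exact htransport.congr_of_eventuallyEq
    (hinterior.mono fun q hq => h.alphaP_eq_fderiv_sRi hq.1 hq.2)

lemma hasLineDerivAt_betaP (hK : 0 < K) (hγ : 1 < γ) (h : IsClassicalSolution K γ T u τ)
    (hp : p ∈ strip T) (hp0 : 0 < p.2) :
    HasLineDerivAt ℝ (uncurry (betaP K γ u τ))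
      (-(k1P K γ τ p.1 p.2 * (betaP K γ u τ p.1 p.2 - alphaP K γ u τ p.1 p.2) *
        betaP K γ u τ p.1 p.2)) p (-cP K γ τ p.1 p.2, 1) := by
  obtain ⟨c', hc, hcx⟩ := h.exists_hasFDerivAt_cP hK hγ hp hp0
  have hinterior := eventually_mem_strip hp hp0
  have htransport := hasLineDerivAt_fderiv_fst_of_transport
    (h.contDiffAt_rRi hp hp0) hc.fun_neg
    (hinterior.mono fun q hq => h.fderiv_rRi_characteristic hK.le hγ hq.1 hq.2)
  have hcx' : (-c') (1, 0) = k1P K γ τ p.1 p.2 *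
      (betaP K γ u τ p.1 p.2 - alphaP K γ u τ p.1 p.2) := by
    rw [neg_apply, hcx]
    ring
  rw [hcx'] at htransport
  rw [h.betaP_eq_fderiv_rRi hp hp0] at htransport ⊢
  exact htransport.congr_of_eventuallyEq
    (hinterior.mono fun q hq => h.betaP_eq_fderiv_rRi hq.1 hq.2)

end Characteristics

section Bounds

lemma abs_cP_le (hK : 0 < K) (hγ : 1 < γ) (h : IsClassicalSolution K γ T u τ) (hp : p ∈ strip T)
    {B : ℝ} (hs : sRi K γ u τ p.1 p.2 ≤ B) (hr : -rRi K γ u τ p.1 p.2 ≤ B) :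
    |cP K γ τ p.1 p.2| ≤ KcC K γ * B ^ ((γ + 1) / (γ - 1)) := by
  rw [abs_of_nonneg (cP_nonneg (h.τ_pos p hp).le)]
  refine cP_le_of_etaP_le hK hγ (h.τ_pos p hp) ?_
  rw [sRi] at hs
  rw [rRi] at hr
  linarith

-- The wave speed is bounded only as long as the invariants are, so the two bounds have to be
-- propagated together.
lemma sRi_lt_and_neg_rRi_lt (hK : 0 < K) (hγ : 1 < γ) (h : IsClassicalSolution K γ T u τ)
    {B : ℝ} (hB : 0 ≤ B) (hs : ∀ x, sRi K γ u τ x 0 < B) (hr : ∀ x, -rRi K γ u τ x 0 < B)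
    (hp : p ∈ strip T) : sRi K γ u τ p.1 p.2 < B ∧ -rRi K γ u τ p.1 p.2 < B := by
  have hu := h.contDiffOn_u.continuousOn
  have hη := h.contDiffOn_etaP.continuousOn
  have hbound := lt_on_strip_of_damped (T := T)
    (f := ![uncurry (sRi K γ u τ), fun q => -uncurry (rRi K γ u τ) q]) (k := 0)
    (c := ![uncurry (cP K γ τ), fun q => -uncurry (cP K γ τ) q])
    (hL := mul_nonneg (KcC_nonneg hγ.le) (rpow_nonneg hB _)) (hM := hB)
    (hf := Fin.forall_fin_two.2 ⟨hu.add hη, (hu.sub hη).neg⟩)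
    (hk := fun _ => continuousOn_const)
    (hderiv := Fin.forall_fin_two.2
      ⟨fun q hq hq0 => (h.hasLineDerivAt_sRi hK.le hγ hq hq0).congr_deriv (by simp),
        fun q hq hq0 => (h.hasLineDerivAt_rRi hK.le hγ hq hq0).fun_neg.congr_deriv (by simp)⟩)
    (hdamp := fun _ _ _ _ => le_rfl)
    (hspeed := Fin.forall_fin_two.2 ⟨fun q hq hle => h.abs_cP_le hK hγ hq (hle 0) (hle 1),
      fun q hq hle => (abs_neg _).trans_le (h.abs_cP_le hK hγ hq (hle 0) (hle 1))⟩)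
    (hinit := Fin.forall_fin_two.2 ⟨hs, hr⟩)
  exact ⟨hbound 0 p hp, hbound 1 p hp⟩

lemma exists_forall_abs_cP_le (hK : 0 < K) (hγ : 1 < γ) (hT : 0 < T)
    (h : IsClassicalSolution K γ T u τ) {C : ℝ} (hC : ∀ x, |u x 0| ≤ C ∧ 1 / τ x 0 ≤ C) :
    ∃ L, 0 ≤ L ∧ ∀ p ∈ strip T, |cP K γ τ p.1 p.2| ≤ L := by
  set D := 2 * √(K * γ) / (γ - 1) * C ^ ((γ - 1) / 2)
  have hη : ∀ x, etaP K γ τ x 0 ≤ D := fun x =>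
    etaP_le_of_inv_le hγ (h.τ_pos (x, 0) ⟨le_rfl, hT⟩) (hC x).2
  have hη0 := etaP_pos hK hγ (h.τ_pos (0, 0) ⟨le_rfl, hT⟩)
  have hB : 0 ≤ C + D + 1 := by linarith [abs_nonneg (u 0 0), (hC 0).1, hη 0]
  have hs : ∀ x, sRi K γ u τ x 0 < C + D + 1 := fun x => by
    rw [sRi]
    linarith [(abs_le.1 (hC x).1).2, hη x]
  have hr : ∀ x, -rRi K γ u τ x 0 < C + D + 1 := fun x => by
    rw [rRi]
    linarith [(abs_le.1 (hC x).1).1, hη x]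
  refine ⟨KcC K γ * (C + D + 1) ^ ((γ + 1) / (γ - 1)),
    mul_nonneg (KcC_nonneg hγ.le) (rpow_nonneg hB _), fun p hp => ?_⟩
  have hsr := h.sRi_lt_and_neg_rRi_lt hK hγ hB hs hr hp
  exact h.abs_cP_le hK hγ hp hsr.1.le hsr.2.le

lemma alphaP_lt_and_betaP_lt (hK : 0 < K) (hγ : 1 < γ) (h : IsClassicalSolution K γ T u τ)
    {L M : ℝ} (hL : 0 ≤ L) (hspeed : ∀ p ∈ strip T, |cP K γ τ p.1 p.2| ≤ L) (hM : 0 ≤ M)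
    (hα : ∀ x, alphaP K γ u τ x 0 < M) (hβ : ∀ x, betaP K γ u τ x 0 < M) (hp : p ∈ strip T) :
    alphaP K γ u τ p.1 p.2 < M ∧ betaP K γ u τ p.1 p.2 < M := by
  have hk := h.continuousOn_k1P hK hγ
  have hk0 : ∀ q ∈ strip T, 0 ≤ k1P K γ τ q.1 q.2 := fun q hq => k1P_nonneg hK hγ (h.τ_pos q hq)
  have hbound := lt_on_strip_of_damped (T := T)
    (f := ![uncurry (alphaP K γ u τ), uncurry (betaP K γ u τ)])
    (k := ![fun q => k1P K γ τ q.1 q.2 * (alphaP K γ u τ q.1 q.2 - betaP K γ u τ q.1 q.2),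
      fun q => k1P K γ τ q.1 q.2 * (betaP K γ u τ q.1 q.2 - alphaP K γ u τ q.1 q.2)])
    (c := ![uncurry (cP K γ τ), fun q => -uncurry (cP K γ τ) q])
    (hL := hL) (hM := hM)
    (hf := Fin.forall_fin_two.2 ⟨h.continuousOn_alphaP, h.continuousOn_betaP⟩)
    (hk := Fin.forall_fin_two.2 ⟨hk.mul (h.continuousOn_alphaP.sub h.continuousOn_betaP),
      hk.mul (h.continuousOn_betaP.sub h.continuousOn_alphaP)⟩)
    (hderiv := Fin.forall_fin_two.2 ⟨fun q => h.hasLineDerivAt_alphaP hK hγ,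
      fun q => h.hasLineDerivAt_betaP hK hγ⟩)
    (hdamp := Fin.forall_fin_two.2 ⟨fun q hq hle => mul_nonneg (hk0 q hq) (sub_nonneg.2 (hle 1)),
      fun q hq hle => mul_nonneg (hk0 q hq) (sub_nonneg.2 (hle 0))⟩)
    (hspeed := Fin.forall_fin_two.2 ⟨fun q hq _ => hspeed q hq,
      fun q hq _ => (abs_neg _).trans_le (hspeed q hq)⟩)
    (hinit := Fin.forall_fin_two.2 ⟨hα, hβ⟩)
  exact ⟨hbound 0 p hp, hbound 1 p hp⟩

end Bounds

end IsClassicalSolution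

lemma nonneg_of_deriv_le_of_bddBelow {f : ℝ → ℝ} (hf : Differentiable ℝ f) {M : ℝ}
    (hderiv : ∀ x, deriv f x ≤ M) (hbdd : BddBelow (range f)) : 0 ≤ M := by
  by_contra! hM
  obtain ⟨b, hb⟩ := hbdd
  have hb0 : b ≤ f 0 := hb (mem_range_self 0)
  have hgrowth : f ((b - f 0 - 1) / M) - f 0 ≤ M * ((b - f 0 - 1) / M - 0) :=
    image_sub_le_mul_sub_of_deriv_le hf hderiv (div_nonneg_of_nonpos (by linarith) hM.le)
  rw [sub_zero, mul_div_cancel₀ _ hM.ne] at hgrowth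
  linarith [hb (mem_range_self ((b - f 0 - 1) / M))]

lemma pdx_eq_half_alphaP_add_betaP (K γ : ℝ) (u τ : ℝ → ℝ → ℝ) (x t : ℝ) :
    pdx u x t = (alphaP K γ u τ x t + betaP K γ u τ x t) / 2 := by
  rw [alphaP, betaP]
  ring

theorem psystem_ux_upper_bound_general
    (K γ : ℝ) (hK : 0 < K) (hγ : 1 < γ)
    (T : EReal)
    (u τ : ℝ → ℝ → ℝ)
    (hu_reg : ContDiffOn ℝ 2 (fun p : ℝ × ℝ => u p.1 p.2) (strip T))
    (hτ_reg : ContDiffOn ℝ 2 (fun p : ℝ × ℝ => τ p.1 p.2) (strip T))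
    (hτ_pos : ∀ x t : ℝ, 0 ≤ t → (t : EReal) < T → 0 < τ x t)
    (hpde : ∀ x t : ℝ, 0 ≤ t → (t : EReal) < T → pSystem K γ u τ x t)
    (hbdd : ∃ C : ℝ, ∀ x : ℝ, |u x 0| ≤ C ∧ 1 / τ x 0 ≤ C)
    (M : ℝ)
    (hM0 : ∀ x : ℝ, alphaP K γ u τ x 0 < M ∧ betaP K γ u τ x 0 < M) :
    ∀ x t : ℝ, 0 ≤ t → (t : EReal) < T →
      pdt τ x t = pdx u x t ∧
      pdx u x t = (alphaP K γ u τ x t + betaP K γ u τ x t) / 2 ∧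
      pdx u x t < M := by
  intro x t ht0 htT
  have h : IsClassicalSolution K γ T u τ := ⟨hu_reg, hτ_reg,
    fun p hp => hτ_pos p.1 p.2 hp.1 hp.2, fun p hp => hpde p.1 p.2 hp.1 hp.2⟩
  have hT : 0 < T := (EReal.coe_nonneg.2 ht0).trans_lt htT
  have hmean := pdx_eq_half_alphaP_add_betaP K γ u τ
  obtain ⟨C, hC⟩ := hbdd
  have hinit : ∀ y, pdx u y 0 ≤ M := fun y => by linarith [hmean y 0, (hM0 y).1, (hM0 y).2]
  have hM : 0 ≤ M := nonneg_of_deriv_le_of_bddBelow (f := fun y => u y 0)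
    (fun y => (hasDerivAt_fst_of_strip (p := (y, 0)) (hu_reg.differentiableOn two_ne_zero)
      ⟨le_rfl, hT⟩).differentiableAt)
    hinit ⟨-C, forall_mem_range.2 fun y => (abs_le.1 (hC y).1).1⟩
  obtain ⟨L, hL, hspeed⟩ := h.exists_forall_abs_cP_le hK hγ hT hC
  have hlt := h.alphaP_lt_and_betaP_lt hK hγ hL hspeed hM (fun y => (hM0 y).1)
    (fun y => (hM0 y).2) (p := (x, t)) ⟨ht0, htT⟩
  exact ⟨sub_eq_zero.1 (hpde x t ht0 htT).1, hmean x t, by linarith [hmean x t, hlt.1, hlt.2]⟩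

/-- upper bound on `τ_t = u_x = (α+β)/2` for the p-system. -/
theorem psystem_ux_upper_bound
    (K γ : ℝ) (hK : 0 < K) (hγ : 1 < γ)
    (T : EReal) (hT : 0 < T)
    (u τ : ℝ → ℝ → ℝ)
    (hu_reg : ContDiffOn ℝ 2 (fun p : ℝ × ℝ => u p.1 p.2) (strip T))
    (hτ_reg : ContDiffOn ℝ 2 (fun p : ℝ × ℝ => τ p.1 p.2) (strip T))
    (hτ_pos : ∀ x t : ℝ, 0 ≤ t → (t : EReal) < T → 0 < τ x t)
    (hpde : ∀ x t : ℝ, 0 ≤ t → (t : EReal) < T → pSystem K γ u τ x t)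
    (hbdd : ∃ C : ℝ, ∀ x : ℝ, |u x 0| ≤ C ∧ τ x 0 ≤ C ∧ 1 / τ x 0 ≤ C ∧
      |alphaP K γ u τ x 0| ≤ C ∧ |betaP K γ u τ x 0| ≤ C)
    (M : ℝ)
    (hM0 : ∀ x : ℝ, alphaP K γ u τ x 0 < M ∧ betaP K γ u τ x 0 < M) :
    ∀ x t : ℝ, 0 ≤ t → (t : EReal) < T →
      pdt τ x t = pdx u x t ∧
      pdx u x t = (alphaP K γ u τ x t + betaP K γ u τ x t) / 2 ∧
      pdx u x t < M :=
  psystem_ux_upper_bound_general K γ hK hγ T u τ hu_reg hτ_reg hτ_pos hpde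
    (hbdd.imp fun _ hC x => ⟨(hC x).1, (hC x).2.2.1⟩) M hM0
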